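/- arXiv:2601.15843 — 2 statements merged into one kernel-verified Lean document; each statement's English description precedes it below -/
import Mathlib

section
/- Let X be a compact Hausdorff space and let A be a unital C(X)-algebra whose structure map Φ : C(X,ℂ) → Z(A) satisfies Φ(C(X,ℂ)) = Z(A). Then A is weakly central if and only if for every x ∈ X with I_x ≠ A, the fiber A(x) = A/I_x has exactly one maximal (closed) two-sided ideal. -/
/- Basic notions about (closed) two-sided ideals of a topological ring,
   weak centrality, and closed ideals generated by a set. -/

section Defs
variable {R : Type*}

/-- A two-sided ring ideal, as a subset of `R`. -/
def IsIdealSet [NonUnitalNonAssocRing R] (S : Set R) : Prop :=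
  (0 : R) ∈ S ∧ (∀ x ∈ S, ∀ y ∈ S, x + y ∈ S) ∧ (∀ x ∈ S, -x ∈ S) ∧
    ∀ x ∈ S, ∀ a : R, a * x ∈ S ∧ x * a ∈ S

/-- A closed two-sided ideal of a topological ring. -/
def IsClosedIdealSet [NonUnitalNonAssocRing R] [TopologicalSpace R] (S : Set R) : Prop :=
  IsIdealSet S ∧ IsClosed S

/-- A maximal (proper) closed two-sided ideal of a topological ring. -/
def IsMaxClosedIdealSet [NonUnitalNonAssocRing R] [TopologicalSpace R] (S : Set R) : Prop :=
  IsClosedIdealSet S ∧ S ≠ Set.univ ∧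
    ∀ T : Set R, IsClosedIdealSet T → S ⊆ T → T = S ∨ T = Set.univ

/-- A maximal (proper) two-sided ideal (no closedness requirement). -/
def IsMaxIdealSet [NonUnitalNonAssocRing R] (S : Set R) : Prop :=
  IsIdealSet S ∧ S ≠ Set.univ ∧
    ∀ T : Set R, IsIdealSet T → S ⊆ T → T = S ∨ T = Set.univ

/-- The center of `R`, as a set. -/
def centerSet (R : Type*) [Mul R] : Set R := {z : R | ∀ a : R, z * a = a * z}

/-- A topological ring is weakly central if no maximal closed two-sided ideal contains the
center, and the map `M ↦ M ∩ Z(R)` is injective on maximal closed two-sided ideals. -/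
def WeaklyCentral (R : Type*) [NonUnitalNonAssocRing R] [TopologicalSpace R] : Prop :=
  (∀ M : Set R, IsMaxClosedIdealSet M → ¬ centerSet R ⊆ M) ∧
    ∀ M N : Set R, IsMaxClosedIdealSet M → IsMaxClosedIdealSet N →
      M ∩ centerSet R = N ∩ centerSet R → M = N

/-- The closed two-sided ideal generated by a set `S`. -/
def closedIdealGen [NonUnitalNonAssocRing R] [TopologicalSpace R] (S : Set R) : Set R :=
  ⋂₀ {T : Set R | IsClosedIdealSet T ∧ S ⊆ T}

end Defs

/-!
The preimage under `Φ` of a maximal closed ideal `M` is a closed ideal of `C(X, 𝕜)`, and it is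
prime because the elements of `Φ(C(X, 𝕜))` are central: for central `w ∉ M` the closed ideal
`{t | t * w ∈ M}` contains `M` but not `1`, so it equals `M`. A closed prime ideal of `C(X, 𝕜)`
consists of all functions vanishing at one point. Hence every `M` contains `I_x` for some `x`, and
then `M ∩ Z(A) = Φ(J_x)`. So two maximal closed ideals have the same intersection with the center
if and only if they contain a common `I_x`, and injectivity of `M ↦ M ∩ Z(A)` is the uniqueness
of the maximal closed ideal above each proper `I_x`.
-/

section IdealSet

variable {R : Type*}

section NonUnital

variable [NonUnitalNonAssocRing R]

protected theorem IsIdealSet.sInter {c : Set (Set R)} (hc : ∀ I ∈ c, IsIdealSet I) :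
    IsIdealSet (⋂₀ c) :=
  ⟨fun I hI => (hc I hI).1,
    fun _ hx _ hy I hI => (hc I hI).2.1 _ (hx I hI) _ (hy I hI),
    fun _ hx I hI => (hc I hI).2.2.1 _ (hx I hI),
    fun _ hx a => ⟨fun I hI => ((hc I hI).2.2.2 _ (hx I hI) a).1,
      fun I hI => ((hc I hI).2.2.2 _ (hx I hI) a).2⟩⟩

theorem IsIdealSet.sUnion_of_isChain {c : Set (Set R)} (hne : c.Nonempty)
    (hchain : IsChain (· ⊆ ·) c) (hc : ∀ I ∈ c, IsIdealSet I) : IsIdealSet (⋃₀ c) := by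
  refine ⟨?_, ?_, ?_, ?_⟩
  · obtain ⟨I, hI⟩ := hne
    exact ⟨I, hI, (hc I hI).1⟩
  · rintro x ⟨I, hI, hx⟩ y ⟨J, hJ, hy⟩
    rcases hchain.total hI hJ with hIJ | hJI
    · exact ⟨J, hJ, (hc J hJ).2.1 x (hIJ hx) y hy⟩
    · exact ⟨I, hI, (hc I hI).2.1 x hx y (hJI hy)⟩
  · rintro x ⟨I, hI, hx⟩
    exact ⟨I, hI, (hc I hI).2.2.1 x hx⟩
  · rintro x ⟨I, hI, hx⟩ a
    exact ⟨⟨I, hI, ((hc I hI).2.2.2 x hx a).1⟩, ⟨I, hI, ((hc I hI).2.2.2 x hx a).2⟩⟩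

variable [TopologicalSpace R]

protected theorem IsIdealSet.closure [IsSemitopologicalRing R] {I : Set R} (hI : IsIdealSet I) :
    IsIdealSet (closure I) := by
  obtain ⟨hzero, hadd, hneg, hmul⟩ := hI
  exact ⟨subset_closure hzero,
    fun x hx y hy => map_mem_closure₂ continuous_add hx hy hadd,
    fun x hx => map_mem_closure continuous_neg hx hneg,
    fun x hx a => ⟨map_mem_closure (continuous_const_mul a) hx fun y hy => (hmul y hy a).1,
      map_mem_closure (f := (· * a)) (continuous_mul_const a) hx fun y hy => (hmul y hy a).2⟩⟩

theorem isIdealSet_closedIdealGen (S : Set R) : IsIdealSet (closedIdealGen S) :=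
  IsIdealSet.sInter fun _ hT => hT.1.1

theorem closedIdealGen_subset_iff {S T : Set R} (hT : IsClosedIdealSet T) :
    closedIdealGen S ⊆ T ↔ S ⊆ T :=
  ⟨fun h _ hs => h fun _ hT' => hT'.2 hs, fun h => Set.sInter_subset_of_mem ⟨hT, h⟩⟩

end NonUnital

theorem IsIdealSet.one_mem_iff [NonAssocRing R] {I : Set R} (hI : IsIdealSet I) :
    1 ∈ I ↔ I = Set.univ :=
  ⟨fun h => Set.eq_univ_of_forall fun a => by simpa using (hI.2.2.2 1 h a).1,
    fun h => h ▸ Set.mem_univ 1⟩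

theorem IsIdealSet.exists_isMaxIdealSet_superset [NonAssocRing R] {I : Set R}
    (hI : IsIdealSet I) (hne : I ≠ Set.univ) : ∃ M, IsMaxIdealSet M ∧ I ⊆ M := by
  obtain ⟨M, hIM, ⟨hM, hM_one⟩, hmax⟩ :=
    zorn_subset_nonempty {J : Set R | IsIdealSet J ∧ 1 ∉ J}
      (fun c hc hchain hne =>
        ⟨⋃₀ c, ⟨.sUnion_of_isChain hne hchain fun J hJ => (hc hJ).1,
          fun ⟨_, hJ, hJ_one⟩ => (hc hJ).2 hJ_one⟩, fun _ => Set.subset_sUnion_of_mem⟩)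
      I ⟨hI, mt hI.one_mem_iff.1 hne⟩
  refine ⟨M, ⟨hM, mt hM.one_mem_iff.2 hM_one, fun T hT hMT => ?_⟩, hIM⟩
  rw [← hT.one_mem_iff, or_iff_not_imp_right]
  exact fun hT_one => (hmax ⟨hT, hT_one⟩ hMT).antisymm hMT

theorem IsIdealSet.eq_univ_of_isUnit_mem [Ring R] {I : Set R} (hI : IsIdealSet I) {u : R}
    (hu : IsUnit u) (huI : u ∈ I) : I = Set.univ := by
  obtain ⟨v, hv⟩ := hu.exists_left_inv
  exact hI.one_mem_iff.1 (hv ▸ (hI.2.2.2 u huI v).1)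

theorem IsIdealSet.closure_ne_univ [Ring R] [TopologicalSpace R]
    (hR : IsOpen {u : R | IsUnit u}) {I : Set R} (hI : IsIdealSet I) (hne : I ≠ Set.univ) :
    closure I ≠ Set.univ := by
  intro h
  obtain ⟨u, hu, huI⟩ :=
    mem_closure_iff.1 (h ▸ Set.mem_univ (1 : R)) {u | IsUnit u} hR isUnit_one
  exact hne (hI.eq_univ_of_isUnit_mem hu huI)

theorem IsMaxIdealSet.isMaxClosedIdealSet [Ring R] [TopologicalSpace R] [IsSemitopologicalRing R]
    (hR : IsOpen {u : R | IsUnit u}) {M : Set R} (hM : IsMaxIdealSet M) :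
    IsMaxClosedIdealSet M := by
  obtain ⟨hM, hne, hmax⟩ := hM
  have hclosure : closure M = M :=
    (hmax _ hM.closure subset_closure).resolve_right (hM.closure_ne_univ hR hne)
  exact ⟨⟨hM, closure_eq_iff_isClosed.1 hclosure⟩, hne, fun T hT => hmax T hT.1⟩

theorem weaklyCentral_iff_injOn [NonAssocRing R] [TopologicalSpace R] :
    WeaklyCentral R ↔ Set.InjOn (· ∩ centerSet R) {M | IsMaxClosedIdealSet M} := by
  have hcenter (M : Set R) (hM : IsMaxClosedIdealSet M) : ¬ centerSet R ⊆ M := fun h =>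
    hM.2.1 (hM.1.1.one_mem_iff.1 (h fun a => by simp))
  exact ⟨fun h M hM N hN => h.2 M N hM hN, fun h => ⟨hcenter, fun _ _ hM hN => h hM hN⟩⟩

theorem IsMaxClosedIdealSet.mem_or_mem_of_mul_mem [Ring R] [TopologicalSpace R]
    [SeparatelyContinuousMul R] {M : Set R} (hM : IsMaxClosedIdealSet M) {z w : R}
    (hw : w ∈ centerSet R) (h : z * w ∈ M) : z ∈ M ∨ w ∈ M := by
  obtain ⟨⟨⟨hzero, hadd, hneg, hmul⟩, hclosed⟩, -, hmax⟩ := hM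
  have hcolon : IsClosedIdealSet {t | t * w ∈ M} := by
    refine ⟨⟨by simpa using hzero, fun x hx y hy => ?_, fun x hx => ?_, fun x hx a => ⟨?_, ?_⟩⟩,
      hclosed.preimage (continuous_mul_const w)⟩
    · simpa only [Set.mem_ofPred_eq, add_mul] using hadd _ hx _ hy
    · simpa only [Set.mem_ofPred_eq, neg_mul] using hneg _ hx
    · simpa only [Set.mem_ofPred_eq, mul_assoc] using (hmul _ hx a).1
    · simpa only [Set.mem_ofPred_eq, mul_assoc, hw a] using (hmul _ hx a).2
  rcases hmax _ hcolon fun m hm => (hmul m hm w).2 with heq | heq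
  · exact .inl (heq ▸ h)
  · have hone : (1 : R) ∈ {t | t * w ∈ M} := heq ▸ Set.mem_univ 1
    exact .inr (by simpa using hone)

end IdealSet

section Comap

variable {F A B : Type*} [FunLike F B A]

/-- The preimage of a two-sided ideal under a ring homomorphism, bundled as an ideal of the source.
It makes the library's ideal theory of `C(X, 𝕜)` available for preimages. -/
def IsIdealSet.comap [Semiring B] [NonAssocRing A] [RingHomClass F B A] {I : Set A}
    (hI : IsIdealSet I) (Φ : F) : Ideal B where
  carrier := Φ ⁻¹' I
  zero_mem' := by simpa using hI.1
  add_mem' hf hg := by simpa using hI.2.1 _ hf _ hg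
  smul_mem' c f hf := by simpa using (hI.2.2.2 _ hf (Φ c)).1

theorem IsIdealSet.comap_eq_comap_iff [Semiring B] [NonAssocRing A] [RingHomClass F B A]
    {I J : Set A} (hI : IsIdealSet I) (hJ : IsIdealSet J) (Φ : F) :
    hI.comap Φ = hJ.comap Φ ↔ I ∩ Set.range Φ = J ∩ Set.range Φ := by
  rw [← Set.preimage_eq_preimage' Set.inter_subset_right Set.inter_subset_right,
    Set.preimage_inter_range, Set.preimage_inter_range]
  exact SetLike.coe_set_eq.symm

theorem IsIdealSet.comap_ne_top [Semiring B] [NonAssocRing A] [RingHomClass F B A] {I : Set A}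
    (hI : IsIdealSet I) (hne : I ≠ Set.univ) (Φ : F) : hI.comap Φ ≠ ⊤ := by
  refine (Ideal.ne_top_iff_one _).2 fun h => hne (hI.one_mem_iff.1 ?_)
  rw [← map_one Φ]
  exact h

theorem IsMaxClosedIdealSet.isPrime_comap [Semiring B] [Ring A] [RingHomClass F B A]
    [TopologicalSpace A] [SeparatelyContinuousMul A] {M : Set A} (hM : IsMaxClosedIdealSet M)
    {Φ : F} (hΦ : Set.range Φ ⊆ centerSet A) : (hM.1.1.comap Φ).IsPrime where
  ne_top' := hM.1.1.comap_ne_top hM.2.1 Φ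
  mem_or_mem' {f g} hfg := by
    have hmul : Φ f * Φ g ∈ M := map_mul Φ f g ▸ hfg
    exact hM.mem_or_mem_of_mul_mem (hΦ ⟨g, rfl⟩) hmul

end Comap

section ContinuousFunctions

open ContinuousMap

variable {X 𝕜 : Type*} [TopologicalSpace X] [CompactSpace X] [T2Space X] [RCLike 𝕜]

theorem subsingleton_compl_setOfIdeal_of_isPrime {I : Ideal C(X, 𝕜)} (hI : I.IsPrime) :
    (setOfIdeal I)ᶜ.Subsingleton := by
  have subset_setOfIdeal {U : Set X} (hU : IsOpen U) (h : idealOfSet 𝕜 U ≤ I) :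
      U ⊆ setOfIdeal I := by
    rw [← setOfIdeal_ofSet_of_isOpen 𝕜 hU]
    exact (ideal_gc X 𝕜).monotone_l h
  intro x hx y hy
  by_contra hxy
  obtain ⟨U, V, hU, hV, hxU, hyV, hUV⟩ := t2_separation hxy
  have hinf : idealOfSet 𝕜 U ⊓ idealOfSet 𝕜 V ≤ I :=
    calc idealOfSet 𝕜 U ⊓ idealOfSet 𝕜 V = idealOfSet 𝕜 (U ∩ V) := (ideal_gc X 𝕜).u_inf.symm
      _ = ⊥ := by rw [hUV.inter_eq, idealOfEmpty_eq_bot]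
      _ ≤ I := bot_le
  rcases hI.inf_le.1 hinf with h | h
  · exact hx (subset_setOfIdeal hU h hxU)
  · exact hy (subset_setOfIdeal hV h hyV)

theorem exists_eq_idealOfSet_compl_singleton_of_isPrime {I : Ideal C(X, 𝕜)} (hI : I.IsPrime)
    (hclosed : IsClosed (I : Set C(X, 𝕜))) : ∃ x, I = idealOfSet 𝕜 {x}ᶜ := by
  have hI_eq : idealOfSet 𝕜 (setOfIdeal I) = I := idealOfSet_ofIdeal_isClosed hclosed
  have hnonempty : (setOfIdeal I)ᶜ.Nonempty := by
    rw [Set.nonempty_compl]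
    intro h
    exact hI.ne_top (by rw [← hI_eq, h]; exact (ideal_gc X 𝕜).u_top)
  obtain ⟨x, hx⟩ := Set.exists_eq_singleton_iff_nonempty_subsingleton.2
    ⟨hnonempty, subsingleton_compl_setOfIdeal_of_isPrime hI⟩
  exact ⟨x, by rw [← hx, compl_compl, hI_eq]⟩

end ContinuousFunctions

section Fiber

variable {X 𝕜 A F : Type*} [TopologicalSpace X] [RCLike 𝕜] [Ring A] [TopologicalSpace A]

/-- The ideal `I_x` of a `C(X)`-algebra with structure map `Φ`, the kernel of the quotient map onto
the fiber at `x`. The structure map is taken as a bare function. -/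
def fiberIdeal (Φ : C(X, 𝕜) → A) (x : X) : Set A :=
  closedIdealGen (Φ '' {f | f x = 0})

variable [CompactSpace X] [T2Space X] [FunLike F C(X, 𝕜) A] [RingHomClass F C(X, 𝕜) A]
  {Φ : F} {M N : Set A}

open ContinuousMap

theorem IsMaxClosedIdealSet.fiberIdeal_subset_iff (hM : IsMaxClosedIdealSet M) {x : X} :
    fiberIdeal Φ x ⊆ M ↔ hM.1.1.comap Φ = idealOfSet 𝕜 {x}ᶜ := by
  have hle : fiberIdeal Φ x ⊆ M ↔ idealOfSet 𝕜 {x}ᶜ ≤ hM.1.1.comap Φ := by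
    rw [fiberIdeal, closedIdealGen_subset_iff hM.1, Set.image_subset_iff]
    exact forall_congr' fun f => imp_congr_left (mem_idealOfSet_compl_singleton x f).symm
  rw [hle]
  exact ⟨fun h => ((idealOf_compl_singleton_isMaximal 𝕜 x).eq_of_le
    (hM.1.1.comap_ne_top hM.2.1 Φ) h).symm, fun h => h.ge⟩

variable [SeparatelyContinuousMul A]

theorem IsMaxClosedIdealSet.exists_fiberIdeal_subset (hM : IsMaxClosedIdealSet M)
    (hcont : Continuous Φ) (hΦ : Set.range Φ ⊆ centerSet A) : ∃ x, fiberIdeal Φ x ⊆ M := by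
  obtain ⟨x, hx⟩ := exists_eq_idealOfSet_compl_singleton_of_isPrime (hM.isPrime_comap hΦ)
    (hM.1.2.preimage hcont)
  exact ⟨x, hM.fiberIdeal_subset_iff.2 hx⟩

theorem IsMaxClosedIdealSet.inter_centerSet_eq_iff_exists_fiberIdeal_subset
    (hM : IsMaxClosedIdealSet M) (hN : IsMaxClosedIdealSet N) (hcont : Continuous Φ)
    (hΦ : Set.range Φ = centerSet A) :
    M ∩ centerSet A = N ∩ centerSet A ↔ ∃ x, fiberIdeal Φ x ⊆ M ∧ fiberIdeal Φ x ⊆ N := by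
  rw [← hΦ, ← hM.1.1.comap_eq_comap_iff hN.1.1 Φ]
  constructor
  · intro hMN
    obtain ⟨x, hx⟩ := hM.exists_fiberIdeal_subset hcont hΦ.subset
    exact ⟨x, hx, hN.fiberIdeal_subset_iff.2 (hMN ▸ hM.fiberIdeal_subset_iff.1 hx)⟩
  · rintro ⟨x, hxM, hxN⟩
    rw [hM.fiberIdeal_subset_iff.1 hxM, hN.fiberIdeal_subset_iff.1 hxN]

end Fiber

theorem weaklyCentral_iff_fibers_have_unique_maximal_ideal_general
    {X 𝕜 A F : Type*} [TopologicalSpace X] [CompactSpace X] [T2Space X] [RCLike 𝕜]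
    [Ring A] [TopologicalSpace A] [IsSemitopologicalRing A] (hA : IsOpen {a : A | IsUnit a})
    [FunLike F C(X, 𝕜) A] [RingHomClass F C(X, 𝕜) A] {Φ : F} (hcont : Continuous Φ)
    (hΦ : Set.range Φ = centerSet A) :
    WeaklyCentral A ↔ ∀ x : X, fiberIdeal Φ x ≠ Set.univ →
      ∃! N : Set A, IsMaxClosedIdealSet N ∧ fiberIdeal Φ x ⊆ N := by
  rw [weaklyCentral_iff_injOn]
  constructor
  · intro hinj x hx
    obtain ⟨N, hN, hxN⟩ := (isIdealSet_closedIdealGen _).exists_isMaxIdealSet_superset hx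
    have hN := hN.isMaxClosedIdealSet hA
    refine ⟨N, ⟨hN, hxN⟩, fun M ⟨hM, hxM⟩ => hinj hM hN ?_⟩
    exact (hM.inter_centerSet_eq_iff_exists_fiberIdeal_subset hN hcont hΦ).2 ⟨x, hxM, hxN⟩
  · intro hunique M hM N hN hMN
    obtain ⟨x, hxM, hxN⟩ :=
      (hM.inter_centerSet_eq_iff_exists_fiberIdeal_subset hN hcont hΦ).1 hMN
    have hx : fiberIdeal Φ x ≠ Set.univ := fun h => hM.2.1 (Set.univ_subset_iff.1 (h ▸ hxM))
    exact (hunique x hx).unique ⟨hM, hxM⟩ ⟨hN, hxN⟩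

/-- **Weak centrality of a `C(X)`-algebra via its fibers.**
Let `X` be a compact Hausdorff space and `A` a unital `C(X)`-algebra with structure map
`Φ : C(X, ℂ) → A` whose range is exactly the center of `A`.  For `x : X`, let
`I_x = closedIdealGen (Φ '' J_x)` be the closed two-sided ideal generated by the functions
vanishing at `x`.  Then `A` is weakly central iff for every `x` with `I_x ≠ A`, the fiber
`A/I_x` has exactly one maximal closed two-sided ideal; by the ideal correspondence for
quotients, the latter is expressed as: there is exactly one maximal closed two-sided ideal
of `A` containing `I_x`. -/
theorem weaklyCentral_iff_fibers_have_unique_maximal_ideal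
    {X A : Type*} [TopologicalSpace X] [CompactSpace X] [T2Space X]
    [NormedRing A] [StarRing A] [CStarRing A]
    [NormedAlgebra ℂ A] [StarModule ℂ A] [CompleteSpace A]
    (Φ : C(X, ℂ) →⋆ₐ[ℂ] A)
    (hΦ : Set.range ⇑Φ = centerSet A) :
    WeaklyCentral A ↔
      ∀ x : X, closedIdealGen (⇑Φ '' {f : C(X, ℂ) | f x = 0}) ≠ Set.univ →
        ∃! N : Set A, IsMaxClosedIdealSet N ∧
          closedIdealGen (⇑Φ '' {f : C(X, ℂ) | f x = 0}) ⊆ N := by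
  let _ : CStarAlgebra A := {}
  open scoped CStarAlgebra in
  exact weaklyCentral_iff_fibers_have_unique_maximal_ideal_general Units.isOpen
    (map_continuous Φ) hΦ
end

section
/- Let H be a separable infinite-dimensional complex Hilbert space, let K(H) ⊆ B(H) be the compact operators, and let p ∈ B(H) be an orthogonal projection whose range and kernel are both infinite-dimensional. Let A = {K + α·p + β·(1−p) : K ∈ K(H), α, β ∈ ℂ} ⊆ B(H). Then A is a unital C*-subalgebra of B(H), and its maximal closed two-sided ideals are exactly the two ideals K(H) + ℂ·p and K(H) + ℂ·(1−p); in particular A has exactly two maximal closed two-sided ideals. -/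
section RelativeDefs
variable {R : Type*}

/-- A closed two-sided ideal of the subalgebra `𝒜 ⊆ R`, as a subset of `R`. -/
def IsClosedIdealIn [NonUnitalNonAssocRing R] [TopologicalSpace R] (𝒜 M : Set R) : Prop :=
  M ⊆ 𝒜 ∧ (0 : R) ∈ M ∧ (∀ x ∈ M, ∀ y ∈ M, x + y ∈ M) ∧ (∀ x ∈ M, -x ∈ M) ∧
    (∀ x ∈ M, ∀ a ∈ 𝒜, a * x ∈ M ∧ x * a ∈ M) ∧ IsClosed M

/-- A maximal (proper) closed two-sided ideal of the subalgebra `𝒜 ⊆ R`. -/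
def IsMaxClosedIdealIn [NonUnitalNonAssocRing R] [TopologicalSpace R] (𝒜 M : Set R) : Prop :=
  IsClosedIdealIn 𝒜 M ∧ M ≠ 𝒜 ∧
    ∀ T : Set R, IsClosedIdealIn 𝒜 T → M ⊆ T → T = M ∨ T = 𝒜

/-- A two-sided ideal of the subalgebra `𝒜 ⊆ R` (no closedness). -/
def IsIdealIn [NonUnitalNonAssocRing R] (𝒜 M : Set R) : Prop :=
  M ⊆ 𝒜 ∧ (0 : R) ∈ M ∧ (∀ x ∈ M, ∀ y ∈ M, x + y ∈ M) ∧ (∀ x ∈ M, -x ∈ M) ∧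
    ∀ x ∈ M, ∀ a ∈ 𝒜, a * x ∈ M ∧ x * a ∈ M

/-- A maximal (proper) two-sided ideal of the subalgebra `𝒜 ⊆ R`. -/
def IsMaxIdealIn [NonUnitalNonAssocRing R] (𝒜 M : Set R) : Prop :=
  IsIdealIn 𝒜 M ∧ M ≠ 𝒜 ∧ ∀ T : Set R, IsIdealIn 𝒜 T → M ⊆ T → T = M ∨ T = 𝒜

/-- The center of the subalgebra `𝒜 ⊆ R`, as a subset of `R`. -/
def centerIn [Mul R] (𝒜 : Set R) : Set R := {z ∈ 𝒜 | ∀ a ∈ 𝒜, z * a = a * z}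

/-- Weak centrality of the subalgebra `𝒜 ⊆ R`: no maximal closed two-sided ideal of `𝒜`
contains the center of `𝒜`, and `M ↦ M ∩ Z(𝒜)` is injective on maximal closed two-sided
ideals of `𝒜`. -/
def WeaklyCentralIn [NonUnitalNonAssocRing R] [TopologicalSpace R] (𝒜 : Set R) : Prop :=
  (∀ M : Set R, IsMaxClosedIdealIn 𝒜 M → ¬ centerIn 𝒜 ⊆ M) ∧
    ∀ M N : Set R, IsMaxClosedIdealIn 𝒜 M → IsMaxClosedIdealIn 𝒜 N →
      M ∩ centerIn 𝒜 = N ∩ centerIn 𝒜 → M = N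

end RelativeDefs

/-
Write `𝒜 = J + 𝕜p + 𝕜q` with `J = K(H)` and `q = 1 - p`; then `𝒜 / J ≅ 𝕜 × 𝕜`, whose maximal ideals
are the two coordinate axes. Concretely, for an ideal `M ⊇ J` of `𝒜`, multiplying an element
`k + α p + β q` of `M` by `α⁻¹ p` shows that `p ∈ M` as soon as `α ≠ 0`, so that either `p ∈ M` or
`M ⊆ J + 𝕜q`; symmetrically in `p` and `q`. The hypothesis `J ⊆ M` is harmless, since every nonzero
closed ideal of `𝒜` contains the rank-one operators, hence their closed linear span `K(H)`.
-/

section ClosedIdeals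

variable {R : Type*} [NonUnitalNonAssocRing R] {𝒜 M : Set R}

lemma IsClosedIdealIn.isIdealIn [TopologicalSpace R] (hM : IsClosedIdealIn 𝒜 M) :
    IsIdealIn 𝒜 M :=
  ⟨hM.1, hM.2.1, hM.2.2.1, hM.2.2.2.1, hM.2.2.2.2.1⟩

lemma IsClosedIdealIn.isClosed [TopologicalSpace R] (hM : IsClosedIdealIn 𝒜 M) : IsClosed M :=
  hM.2.2.2.2.2

namespace IsIdealIn

variable {x y a : R}

lemma subset (hM : IsIdealIn 𝒜 M) : M ⊆ 𝒜 := hM.1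

lemma zero_mem (hM : IsIdealIn 𝒜 M) : 0 ∈ M := hM.2.1

lemma add_mem (hM : IsIdealIn 𝒜 M) (hx : x ∈ M) (hy : y ∈ M) : x + y ∈ M := hM.2.2.1 x hx y hy

lemma sub_mem (hM : IsIdealIn 𝒜 M) (hx : x ∈ M) (hy : y ∈ M) : x - y ∈ M :=
  sub_eq_add_neg x y ▸ hM.add_mem hx (hM.2.2.2.1 y hy)

lemma mul_mem_left (hM : IsIdealIn 𝒜 M) (ha : a ∈ 𝒜) (hx : x ∈ M) : a * x ∈ M :=
  (hM.2.2.2.2 x hx a ha).1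

lemma mul_mem_right (hM : IsIdealIn 𝒜 M) (hx : x ∈ M) (ha : a ∈ 𝒜) : x * a ∈ M :=
  (hM.2.2.2.2 x hx a ha).2

end IsIdealIn

lemma IsIdealIn.eq_of_one_mem {R : Type*} [NonAssocRing R] {𝒜 M : Set R} (hM : IsIdealIn 𝒜 M)
    (h1 : 1 ∈ M) : M = 𝒜 :=
  hM.subset.antisymm fun a ha => mul_one a ▸ hM.mul_mem_left ha h1

lemma IsIdealIn.eq_of_mem_of_one_sub_mem {R : Type*} [NonAssocRing R] {𝒜 M : Set R} {p : R}
    (hM : IsIdealIn 𝒜 M) (hp : p ∈ M) (hq : 1 - p ∈ M) : M = 𝒜 :=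
  hM.eq_of_one_mem (add_sub_cancel p 1 ▸ hM.add_mem hp hq)

end ClosedIdeals

section IdealAddSpan

variable {𝕜 R : Type*}

/-- The subspace `J + span s` of an algebra, for an ideal `J` and a set `s`. The cases of interest
are `J + 𝕜p` (for `s = {p}`) and `J + 𝕜p + 𝕜q` (for `s = {p, q}`). -/
def idealAddSpan (𝕜 : Type*) {R : Type*} [CommRing 𝕜] [Ring R] [Algebra 𝕜 R] (J : Ideal R)
    (s : Set R) : Submodule 𝕜 R :=
  J.restrictScalars 𝕜 ⊔ Submodule.span 𝕜 s

section Algebraic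

variable [CommRing 𝕜] [Ring R] [Algebra 𝕜 R] {J : Ideal R} {s t u : Set R} {p q x y : R}

lemma mem_idealAddSpan :
    x ∈ idealAddSpan 𝕜 J s ↔ ∃ k ∈ J, ∃ a ∈ Submodule.span 𝕜 s, k + a = x :=
  Submodule.mem_sup

lemma mem_idealAddSpan_singleton :
    x ∈ idealAddSpan 𝕜 J {p} ↔ ∃ k ∈ J, ∃ α : 𝕜, x = k + α • p := by
  simp only [mem_idealAddSpan, Submodule.mem_span_singleton, exists_exists_eq_and,
    eq_comm (a := x)]

lemma mem_idealAddSpan_pair :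
    x ∈ idealAddSpan 𝕜 J {p, q} ↔ ∃ k ∈ J, ∃ α β : 𝕜, x = k + α • p + β • q := by
  simp only [mem_idealAddSpan, Submodule.mem_span_pair, add_assoc]
  constructor
  · rintro ⟨k, hk, _, ⟨α, β, rfl⟩, rfl⟩
    exact ⟨k, hk, α, β, rfl⟩
  · rintro ⟨k, hk, α, β, rfl⟩
    exact ⟨k, hk, _, ⟨α, β, rfl⟩, rfl⟩

lemma mem_idealAddSpan_of_mem_ideal (hx : x ∈ J) : x ∈ idealAddSpan 𝕜 J s :=
  Submodule.mem_sup_left hx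

lemma mem_idealAddSpan_of_mem (hx : x ∈ s) : x ∈ idealAddSpan 𝕜 J s :=
  Submodule.mem_sup_right (Submodule.subset_span hx)

lemma idealAddSpan_mono (hst : s ⊆ t) : idealAddSpan 𝕜 J s ≤ idealAddSpan 𝕜 J t :=
  sup_le_sup_left (Submodule.span_mono hst) _

lemma mul_mem_idealAddSpan [J.IsTwoSided]
    (h : ∀ a ∈ s, ∀ b ∈ t, a * b ∈ idealAddSpan 𝕜 J u)
    (hx : x ∈ idealAddSpan 𝕜 J s) (hy : y ∈ idealAddSpan 𝕜 J t) :
    x * y ∈ idealAddSpan 𝕜 J u := by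
  obtain ⟨k, hk, a, ha, rfl⟩ := mem_idealAddSpan.1 hx
  obtain ⟨l, hl, b, hb, rfl⟩ := mem_idealAddSpan.1 hy
  have hab : a * b ∈ idealAddSpan 𝕜 J u := by
    have hspan : Submodule.span 𝕜 s * Submodule.span 𝕜 t ≤ idealAddSpan 𝕜 J u := by
      rw [Submodule.span_mul_span, Submodule.span_le]
      exact Set.mul_subset_iff.2 h
    exact hspan (Submodule.mul_mem_mul ha hb)
  have hJ : k * (l + b) + a * l ∈ J :=
    J.add_mem (Ideal.IsTwoSided.mul_mem_of_left _ hk) (J.mul_mem_left a hl)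
  convert add_mem (mem_idealAddSpan_of_mem_ideal hJ) hab using 1
  noncomm_ring

lemma star_mem_idealAddSpan [StarRing 𝕜] [StarRing R] [StarModule 𝕜 R]
    (hJ : ∀ k ∈ J, star k ∈ J) (hs : ∀ a ∈ s, star a ∈ s) (hx : x ∈ idealAddSpan 𝕜 J s) :
    star x ∈ idealAddSpan 𝕜 J s := by
  obtain ⟨k, hk, a, ha, rfl⟩ := mem_idealAddSpan.1 hx
  rw [star_add]
  refine add_mem (mem_idealAddSpan_of_mem_ideal (hJ k hk)) ?_
  clear hx
  induction ha using Submodule.span_induction with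
  | mem a ha => exact mem_idealAddSpan_of_mem (hs a ha)
  | zero => simp only [star_zero, zero_mem]
  | add a b _ _ iha ihb => exact star_add a b ▸ add_mem iha ihb
  | smul c a _ iha => exact star_smul c a ▸ Submodule.smul_mem _ _ iha

lemma exists_starSubalgebra_coe_eq_idealAddSpan [StarRing 𝕜] [StarRing R] [StarModule 𝕜 R]
    [J.IsTwoSided] (hJ : ∀ k ∈ J, star k ∈ J) (hp : IsStarProjection p) :
    ∃ S : StarSubalgebra 𝕜 R, (S : Set R) = idealAddSpan 𝕜 J {p, 1 - p} := by
  have hmul : ∀ a ∈ ({p, 1 - p} : Set R), ∀ b ∈ ({p, 1 - p} : Set R),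
      a * b ∈ idealAddSpan 𝕜 J {p, 1 - p} := by
    have hpA : p ∈ idealAddSpan 𝕜 J {p, 1 - p} := mem_idealAddSpan_of_mem (by simp)
    have hqA : 1 - p ∈ idealAddSpan 𝕜 J {p, 1 - p} := mem_idealAddSpan_of_mem (by simp)
    rintro _ (rfl | rfl) _ (rfl | rfl)
    · rwa [hp.isIdempotentElem]
    · simp only [hp.isIdempotentElem.mul_one_sub_self, zero_mem]
    · simp only [hp.isIdempotentElem.one_sub_mul_self, zero_mem]
    · rwa [hp.isIdempotentElem.one_sub]
  have hstar : ∀ a ∈ ({p, 1 - p} : Set R), star a ∈ ({p, 1 - p} : Set R) := by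
    rintro _ (rfl | rfl)
    · simp [hp.isSelfAdjoint.star_eq]
    · simp [hp.isSelfAdjoint.star_eq]
  have hone : 1 ∈ idealAddSpan 𝕜 J {p, 1 - p} :=
    add_sub_cancel p 1 ▸
      add_mem (mem_idealAddSpan_of_mem (by simp)) (mem_idealAddSpan_of_mem (by simp))
  exact ⟨{ (idealAddSpan 𝕜 J {p, 1 - p}).toSubalgebra hone
      fun _ _ => mul_mem_idealAddSpan hmul with
    star_mem' := star_mem_idealAddSpan hJ hstar }, rfl⟩

lemma isIdealIn_idealAddSpan_singleton [J.IsTwoSided] (hp : IsIdempotentElem p)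
    (hpq : p * q = 0) (hqp : q * p = 0) :
    IsIdealIn (idealAddSpan 𝕜 J {p, q} : Set R) (idealAddSpan 𝕜 J {p}) := by
  have hpJ : p ∈ idealAddSpan 𝕜 J {p} := mem_idealAddSpan_of_mem rfl
  refine ⟨idealAddSpan_mono (by simp), zero_mem _, fun _ hx _ hy => add_mem hx hy,
    fun _ hx => neg_mem hx, fun x hx a ha => ⟨?_, ?_⟩⟩
  · refine mul_mem_idealAddSpan ?_ ha hx
    rintro _ (rfl | rfl) _ rfl
    · rwa [hp]
    · simp only [hqp, zero_mem]
  · refine mul_mem_idealAddSpan ?_ hx ha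
    rintro _ rfl _ (rfl | rfl)
    · rwa [hp]
    · simp only [hpq, zero_mem]

lemma notMem_idealAddSpan_singleton (hp : IsIdempotentElem p) (hpq : p * q = 0) (hpJ : p ∉ J) :
    p ∉ idealAddSpan 𝕜 J {q} := by
  intro h
  obtain ⟨k, hk, β, hpk⟩ := mem_idealAddSpan_singleton.1 h
  have : p = p * k := by
    calc p = p * (k + β • q) := by rw [← hpk, hp]
      _ = p * k := by rw [mul_add, mul_smul_comm, hpq, smul_zero, add_zero]
  exact hpJ (this ▸ J.mul_mem_left p hk)

end Algebraic

lemma IsIdealIn.mem_or_subset_idealAddSpan_singleton [Field 𝕜] [Ring R] [Algebra 𝕜 R]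
    {J : Ideal R} {M : Set R} {p q : R} (hM : IsIdealIn (idealAddSpan 𝕜 J {p, q} : Set R) M)
    (hJM : (J : Set R) ⊆ M) (hp : IsIdempotentElem p) (hpq : p * q = 0) :
    p ∈ M ∨ M ⊆ (idealAddSpan 𝕜 J {q} : Set R) := by
  refine or_iff_not_imp_right.2 fun hMq => ?_
  obtain ⟨x, hx, hxq⟩ := Set.not_subset.1 hMq
  obtain ⟨k, hk, α, β, rfl⟩ := mem_idealAddSpan_pair.1 (hM.subset hx)
  have hα : α ≠ 0 := by
    rintro rfl
    exact hxq (mem_idealAddSpan_singleton.2 ⟨k, hk, β, by rw [zero_smul, add_zero]⟩)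
  have hαp : α⁻¹ • p ∈ idealAddSpan 𝕜 J {p, q} :=
    Submodule.smul_mem _ _ (mem_idealAddSpan_of_mem (by simp))
  have hmul : α⁻¹ • p * (k + α • p + β • q) - α⁻¹ • p * k = p := by
    simp only [mul_add, smul_mul_smul_comm, inv_mul_cancel₀ hα, hp.eq, hpq, one_smul, smul_zero,
      add_zero, add_sub_cancel_left]
  exact hmul ▸ hM.sub_mem (hM.mul_mem_left hαp hx) (hJM (J.mul_mem_left _ hk))

section Topological

lemma isClosed_idealAddSpan [NontriviallyNormedField 𝕜] [CompleteSpace 𝕜] [Ring R] [Algebra 𝕜 R]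
    [TopologicalSpace R] [IsTopologicalAddGroup R] [ContinuousSMul 𝕜 R] {J : Ideal R} {s : Set R}
    (hJ : IsClosed (J : Set R)) (hs : s.Finite) : IsClosed (idealAddSpan 𝕜 J s : Set R) := by
  have := FiniteDimensional.span_of_finite 𝕜 hs
  exact Submodule.isClosed_sup_finiteDimensional _ _ hJ

variable [NontriviallyNormedField 𝕜] [CompleteSpace 𝕜] [Ring R] [Algebra 𝕜 R]
  [TopologicalSpace R] [IsTopologicalAddGroup R] [ContinuousSMul 𝕜 R]
  {J : Ideal R} [J.IsTwoSided] {p : R}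

lemma isMaxClosedIdealIn_idealAddSpan_singleton (hJ : IsClosed (J : Set R))
    (hp : IsIdempotentElem p) (hqJ : 1 - p ∉ J) :
    IsMaxClosedIdealIn (idealAddSpan 𝕜 J {p, 1 - p} : Set R) (idealAddSpan 𝕜 J {p}) := by
  have hideal := isIdealIn_idealAddSpan_singleton (𝕜 := 𝕜) (J := J) hp hp.mul_one_sub_self
    hp.one_sub_mul_self
  refine ⟨⟨hideal.1, hideal.2.1, hideal.2.2.1, hideal.2.2.2.1, hideal.2.2.2.2,
    isClosed_idealAddSpan hJ (Set.finite_singleton p)⟩, fun h => ?_, fun T hT hle => ?_⟩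
  · refine notMem_idealAddSpan_singleton (𝕜 := 𝕜) hp.one_sub hp.one_sub_mul_self hqJ ?_
    rw [← SetLike.mem_coe, h]
    exact mem_idealAddSpan_of_mem (by simp)
  · have hJT : (J : Set R) ⊆ T := fun k hk => hle (mem_idealAddSpan_of_mem_ideal hk)
    have hT' := Set.pair_comm p (1 - p) ▸ hT.isIdealIn
    refine (hT'.mem_or_subset_idealAddSpan_singleton hJT hp.one_sub hp.one_sub_mul_self).elim
      (fun hq => Or.inr ?_) (fun hTp => Or.inl (hTp.antisymm hle))
    exact hT.isIdealIn.eq_of_mem_of_one_sub_mem (hle (mem_idealAddSpan_of_mem rfl)) hq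

theorem isMaxClosedIdealIn_idealAddSpan_pair_iff (hJ : IsClosed (J : Set R))
    (hp : IsIdempotentElem p) (hpJ : p ∉ J) (hqJ : 1 - p ∉ J)
    (hmin : ∀ M, IsClosedIdealIn (idealAddSpan 𝕜 J {p, 1 - p} : Set R) M →
      M ⊆ {0} ∨ (J : Set R) ⊆ M) (M : Set R) :
    IsMaxClosedIdealIn (idealAddSpan 𝕜 J {p, 1 - p} : Set R) M ↔
      M = idealAddSpan 𝕜 J {p} ∨ M = idealAddSpan 𝕜 J {1 - p} := by
  have hmax_p := isMaxClosedIdealIn_idealAddSpan_singleton (𝕜 := 𝕜) hJ hp hqJ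
  have hmax_q : IsMaxClosedIdealIn (idealAddSpan 𝕜 J {p, 1 - p} : Set R)
      (idealAddSpan 𝕜 J {1 - p}) := by
    have h := isMaxClosedIdealIn_idealAddSpan_singleton (𝕜 := 𝕜) hJ hp.one_sub
      (by rwa [sub_sub_cancel])
    rwa [sub_sub_cancel, Set.pair_comm] at h
  refine ⟨fun hM => ?_, by rintro (rfl | rfl) <;> assumption⟩
  have hsub : M ⊆ (idealAddSpan 𝕜 J {p} : Set R) ∨ M ⊆ (idealAddSpan 𝕜 J {1 - p} : Set R) := by
    rcases hmin M hM.1 with hM0 | hJM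
    · exact Or.inl (hM0.trans (Set.singleton_subset_iff.2 (zero_mem _)))
    have hM' := hM.1.isIdealIn
    rcases hM'.mem_or_subset_idealAddSpan_singleton hJM hp hp.mul_one_sub_self with hpM | hMq
    · rw [Set.pair_comm] at hM'
      refine Or.inl ((hM'.mem_or_subset_idealAddSpan_singleton hJM hp.one_sub
        hp.one_sub_mul_self).resolve_left fun hqM => hM.2.1 ?_)
      exact hM.1.isIdealIn.eq_of_mem_of_one_sub_mem hpM hqM
    · exact Or.inr hMq
  exact hsub.imp (fun h => ((hM.2.2 _ hmax_p.1 h).resolve_right hmax_p.2.1).symm)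
    (fun h => ((hM.2.2 _ hmax_q.1 h).resolve_right hmax_q.2.1).symm)

end Topological

end IdealAddSpan

section CompactIdeal

/-- The ideal `K(E)` of compact operators on `E`: Mathlib's submodule `compactOperator`, viewed as
an ideal of the ring of bounded operators. -/
def compactIdeal (𝕜 E : Type*) [NontriviallyNormedField 𝕜] [NormedAddCommGroup E]
    [NormedSpace 𝕜 E] : Ideal (E →L[𝕜] E) where
  __ := compactOperator (RingHom.id 𝕜) E E
  smul_mem' T _ hK := IsCompactOperator.clm_comp hK T

variable {𝕜 E : Type*} [NontriviallyNormedField 𝕜] [NormedAddCommGroup E] [NormedSpace 𝕜 E]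

lemma mem_compactIdeal {K : E →L[𝕜] E} : K ∈ compactIdeal 𝕜 E ↔ IsCompactOperator K :=
  Iff.rfl

instance compactIdeal.isTwoSided : (compactIdeal 𝕜 E).IsTwoSided :=
  ⟨fun T hK => IsCompactOperator.comp_clm hK T⟩

lemma isClosed_compactIdeal [CompleteSpace E] : IsClosed (compactIdeal 𝕜 E : Set (E →L[𝕜] E)) :=
  isClosed_setOfPred_isCompactOperator

lemma coe_idealAddSpan_compactIdeal_singleton (p : E →L[𝕜] E) :
    (idealAddSpan 𝕜 (compactIdeal 𝕜 E) {p} : Set (E →L[𝕜] E)) =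
      {T | ∃ K : E →L[𝕜] E, ∃ α : 𝕜, IsCompactOperator K ∧ T = K + α • p} := by
  ext T
  simp only [SetLike.mem_coe, mem_idealAddSpan_singleton, mem_compactIdeal, Set.mem_ofPred_eq,
    exists_and_left]

lemma coe_idealAddSpan_compactIdeal_pair (p q : E →L[𝕜] E) :
    (idealAddSpan 𝕜 (compactIdeal 𝕜 E) {p, q} : Set (E →L[𝕜] E)) =
      {T | ∃ K : E →L[𝕜] E, ∃ α β : 𝕜, IsCompactOperator K ∧ T = K + α • p + β • q} := by
  ext T
  simp only [SetLike.mem_coe, mem_idealAddSpan_pair, mem_compactIdeal, Set.mem_ofPred_eq,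
    exists_and_left]

lemma finiteDimensional_range_of_mem_compactIdeal [CompleteSpace 𝕜] {p : E →L[𝕜] E}
    (hp : IsIdempotentElem p) (hpc : p ∈ compactIdeal 𝕜 E) :
    FiniteDimensional 𝕜 (LinearMap.range (p : E →ₗ[𝕜] E)) := by
  have hfix : ∀ y ∈ LinearMap.range (p : E →ₗ[𝕜] E), p y = y := by
    rintro _ ⟨x, rfl⟩
    exact DFunLike.congr_fun hp x
  have hrestrict := IsCompactOperator.restrict (f := (p : E →ₗ[𝕜] E)) hpc
    (fun y _ => LinearMap.mem_range_self _ y)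
    (ContinuousLinearMap.IsIdempotentElem.isClosed_range hp)
  refine FiniteDimensional.of_isCompactOperator_id ?_
  have hid : id = (p : E →ₗ[𝕜] E).restrict fun y _ => LinearMap.mem_range_self _ y :=
    funext fun y => Subtype.ext (hfix y y.2).symm
  rwa [hid]

end CompactIdeal

section Hilbert

open InnerProductSpace

variable {𝕜 H : Type*} [RCLike 𝕜] [NormedAddCommGroup H] [InnerProductSpace 𝕜 H]

lemma rankOne_mem_compactIdeal (x y : H) : rankOne 𝕜 x y ∈ compactIdeal 𝕜 H := by
  rw [mem_compactIdeal, rankOne_def']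
  exact (isCompactOperator_of_locallyCompactSpace_dom (innerSL 𝕜 y)).clm_comp
    (ContinuousLinearMap.toSpanSingleton 𝕜 x)

lemma starProjection_mem_compactIdeal (F : Submodule 𝕜 H) [FiniteDimensional 𝕜 F] :
    F.starProjection ∈ compactIdeal 𝕜 H := by
  rw [(stdOrthonormalBasis 𝕜 F).starProjection_eq_sum_rankOne]
  exact sum_mem fun _ _ => rankOne_mem_compactIdeal _ _

section Approximation

variable {E : Type*} [NormedAddCommGroup E] [NormedSpace 𝕜 E]

lemma exists_norm_sub_starProjection_comp_le {K : E →L[𝕜] H} (hK : IsCompactOperator K) {ε : ℝ}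
    (hε : 0 < ε) :
    ∃ (F : Submodule 𝕜 H) (_ : FiniteDimensional 𝕜 F), ‖K - F.starProjection ∘L K‖ ≤ ε := by
  have hbdd := (IsCompactOperator.isCompact_closure_image_closedBall (𝕜₁ := 𝕜)
    (f := (K : E →ₗ[𝕜] H)) hK 1).totallyBounded
  obtain ⟨t, ht, hcover⟩ := Metric.totallyBounded_iff.1 hbdd ε hε
  have hF : FiniteDimensional 𝕜 (Submodule.span 𝕜 t) := FiniteDimensional.span_of_finite 𝕜 ht
  refine ⟨Submodule.span 𝕜 t, hF, ContinuousLinearMap.opNorm_le_of_unit_norm hε.le fun x hx => ?_⟩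
  have hKx : K x ∈ closure ((K : E →ₗ[𝕜] H) '' Metric.closedBall 0 1) :=
    subset_closure ⟨x, by simp [hx], rfl⟩
  obtain ⟨z, hz, hdist⟩ := Set.mem_iUnion₂.1 (hcover hKx)
  calc ‖K x - (Submodule.span 𝕜 t).starProjection (K x)‖ ≤ ‖K x - z‖ := by
        rw [Submodule.starProjection_minimal]
        exact ciInf_le ⟨0, Set.forall_mem_range.2 fun _ => norm_nonneg _⟩
          (⟨z, Submodule.subset_span hz⟩ : Submodule.span 𝕜 t)
    _ ≤ ε := (mem_ball_iff_norm.1 hdist).le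

lemma mem_of_isClosed_of_starProjection_comp_mem {S : Set (E →L[𝕜] H)} (hS : IsClosed S)
    {K : E →L[𝕜] H} (hK : IsCompactOperator K)
    (h : ∀ (F : Submodule 𝕜 H) [FiniteDimensional 𝕜 F], F.starProjection ∘L K ∈ S) : K ∈ S := by
  rw [← hS.closure_eq, Metric.mem_closure_iff]
  intro ε hε
  obtain ⟨F, hF, hle⟩ := exists_norm_sub_starProjection_comp_le hK (half_pos hε)
  exact ⟨_, h F, (dist_eq_norm _ _).trans_lt (hle.trans_lt (half_lt_self hε))⟩

end Approximation

lemma star_mem_compactIdeal [CompleteSpace H] {K : H →L[𝕜] H} (hK : K ∈ compactIdeal 𝕜 H) :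
    star K ∈ compactIdeal 𝕜 H := by
  refine mem_of_isClosed_of_starProjection_comp_mem
    (S := star ⁻¹' (compactIdeal 𝕜 H : Set (H →L[𝕜] H)))
    (isClosed_compactIdeal.preimage continuous_star) hK fun F _ => ?_
  change star (F.starProjection * K) ∈ compactIdeal 𝕜 H
  rw [star_mul, (isSelfAdjoint_starProjection F).star_eq]
  exact Ideal.mul_mem_left _ _ (starProjection_mem_compactIdeal F)

section MinimalIdeal

variable {𝒜 M : Set (H →L[𝕜] H)}

lemma IsIdealIn.rankOne_mem (hM : IsIdealIn 𝒜 M) (h𝒜 : ∀ x y : H, rankOne 𝕜 x y ∈ 𝒜)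
    {T : H →L[𝕜] H} (hT : T ∈ M) (hT0 : T ≠ 0) (x y : H) : rankOne 𝕜 x y ∈ M := by
  obtain ⟨u, hu⟩ : ∃ u, T u ≠ 0 := not_forall.1 fun h => hT0 (ContinuousLinearMap.ext h)
  have hTu : inner 𝕜 (T u) (T u) ≠ 0 := inner_self_ne_zero.2 hu
  have hfactor : rankOne 𝕜 ((inner 𝕜 (T u) (T u))⁻¹ • x) (T u) * (T * rankOne 𝕜 u y) =
      rankOne 𝕜 x y := by
    simp only [ContinuousLinearMap.mul_def, comp_rankOne, rankOne_apply, smul_inv_smul₀ hTu]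
  exact hfactor ▸ hM.mul_mem_left (h𝒜 _ _) (hM.mul_mem_right hT (h𝒜 _ _))

lemma IsIdealIn.starProjection_mem (hM : IsIdealIn 𝒜 M) (hrank : ∀ x y : H, rankOne 𝕜 x y ∈ M)
    (F : Submodule 𝕜 H) [FiniteDimensional 𝕜 F] : F.starProjection ∈ M := by
  rw [(stdOrthonormalBasis 𝕜 F).starProjection_eq_sum_rankOne]
  exact Finset.sum_induction _ (· ∈ M) (fun _ _ => hM.add_mem) hM.zero_mem fun _ _ => hrank _ _

lemma IsClosedIdealIn.subset_zero_or_compactIdeal_subset (hM : IsClosedIdealIn 𝒜 M)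
    (h𝒜 : (compactIdeal 𝕜 H : Set (H →L[𝕜] H)) ⊆ 𝒜) :
    M ⊆ {0} ∨ (compactIdeal 𝕜 H : Set (H →L[𝕜] H)) ⊆ M := by
  refine or_iff_not_imp_left.2 fun hM0 K hK => ?_
  obtain ⟨T, hT, hT0⟩ := Set.not_subset.1 hM0
  have hrank := hM.isIdealIn.rankOne_mem (fun x y => h𝒜 (rankOne_mem_compactIdeal x y)) hT hT0
  exact mem_of_isClosed_of_starProjection_comp_mem hM.isClosed hK fun F _ =>
    hM.isIdealIn.mul_mem_right (hM.isIdealIn.starProjection_mem hrank F) (h𝒜 hK)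

end MinimalIdeal

end Hilbert

theorem maximal_ideals_of_compacts_plus_two_scalars_general
    {𝕜 H : Type*} [RCLike 𝕜] [NormedAddCommGroup H] [InnerProductSpace 𝕜 H] [CompleteSpace H]
    (p : H →L[𝕜] H) (hsa : star p = p) (hidem : p * p = p)
    (hrange : ¬ FiniteDimensional 𝕜 (LinearMap.range (p : H →ₗ[𝕜] H)))
    (hker : ¬ FiniteDimensional 𝕜 (LinearMap.ker (p : H →ₗ[𝕜] H))) :
    (∃ S : StarSubalgebra 𝕜 (H →L[𝕜] H),
        (S : Set (H →L[𝕜] H)) =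
          {T | ∃ K : H →L[𝕜] H, ∃ α β : 𝕜,
            IsCompactOperator K ∧ T = K + α • p + β • (1 - p)} ∧
        IsClosed (S : Set (H →L[𝕜] H))) ∧
    ({T : H →L[𝕜] H | ∃ K : H →L[𝕜] H, ∃ α : 𝕜, IsCompactOperator K ∧ T = K + α • p} ≠
      {T : H →L[𝕜] H | ∃ K : H →L[𝕜] H, ∃ β : 𝕜, IsCompactOperator K ∧ T = K + β • (1 - p)}) ∧
    ∀ M : Set (H →L[𝕜] H),
      IsMaxClosedIdealIn
        {T | ∃ K : H →L[𝕜] H, ∃ α β : 𝕜,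
          IsCompactOperator K ∧ T = K + α • p + β • (1 - p)} M ↔
        (M = {T | ∃ K : H →L[𝕜] H, ∃ α : 𝕜, IsCompactOperator K ∧ T = K + α • p} ∨
         M = {T | ∃ K : H →L[𝕜] H, ∃ β : 𝕜, IsCompactOperator K ∧ T = K + β • (1 - p)}) := by
  have hp : IsIdempotentElem p := hidem
  have hpK : p ∉ compactIdeal 𝕜 H := fun h =>
    hrange (finiteDimensional_range_of_mem_compactIdeal hp h)
  have hqK : 1 - p ∉ compactIdeal 𝕜 H := fun h => by
    refine hker ?_
    rw [LinearMap.IsIdempotentElem.ker_eq_range_one_sub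
      (ContinuousLinearMap.IsIdempotentElem.toLinearMap hp)]
    exact finiteDimensional_range_of_mem_compactIdeal hp.one_sub h
  rw [← coe_idealAddSpan_compactIdeal_pair, ← coe_idealAddSpan_compactIdeal_singleton,
    ← coe_idealAddSpan_compactIdeal_singleton]
  refine ⟨?_, fun h => ?_, isMaxClosedIdealIn_idealAddSpan_pair_iff isClosed_compactIdeal hp hpK hqK
    fun M hM => hM.subset_zero_or_compactIdeal_subset fun K => mem_idealAddSpan_of_mem_ideal⟩
  · obtain ⟨S, hS⟩ := exists_starSubalgebra_coe_eq_idealAddSpan (𝕜 := 𝕜)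
      (J := compactIdeal 𝕜 H) (fun _ => star_mem_compactIdeal) ⟨hp, hsa⟩
    refine ⟨S, hS, ?_⟩
    rw [hS]
    exact isClosed_idealAddSpan isClosed_compactIdeal (Set.toFinite _)
  · refine notMem_idealAddSpan_singleton (𝕜 := 𝕜) hp hp.mul_one_sub_self hpK ?_
    exact h.subset (mem_idealAddSpan_of_mem rfl)

open TopologicalSpace in
/-- **The maximal ideals of `K(H) + ℂp + ℂ(1-p)`.**
Let `H` be a separable infinite-dimensional Hilbert space, `p` an orthogonal projection with
infinite-dimensional range and kernel, and
`𝒜 = {K + α•p + β•(1-p) : K compact, α β ∈ ℂ} ⊆ B(H)`.  Then `𝒜` is a unital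
C*-subalgebra of `B(H)` and its maximal closed two-sided ideals are exactly
`K(H) + ℂ·p` and `K(H) + ℂ·(1-p)`; in particular there are exactly two of them. -/
theorem maximal_ideals_of_compacts_plus_two_scalars
    {H : Type*} [NormedAddCommGroup H] [InnerProductSpace ℂ H] [CompleteSpace H]
    [SeparableSpace H] (hinf : ¬ FiniteDimensional ℂ H)
    (p : H →L[ℂ] H) (hsa : star p = p) (hidem : p * p = p)
    (hrange : ¬ FiniteDimensional ℂ (LinearMap.range (p : H →ₗ[ℂ] H)))
    (hker : ¬ FiniteDimensional ℂ (LinearMap.ker (p : H →ₗ[ℂ] H))) :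
    (∃ S : StarSubalgebra ℂ (H →L[ℂ] H),
        (S : Set (H →L[ℂ] H)) =
          {T | ∃ K : H →L[ℂ] H, ∃ α β : ℂ,
            IsCompactOperator K ∧ T = K + α • p + β • (1 - p)} ∧
        IsClosed (S : Set (H →L[ℂ] H))) ∧
    ({T : H →L[ℂ] H | ∃ K : H →L[ℂ] H, ∃ α : ℂ, IsCompactOperator K ∧ T = K + α • p} ≠
      {T : H →L[ℂ] H | ∃ K : H →L[ℂ] H, ∃ β : ℂ, IsCompactOperator K ∧ T = K + β • (1 - p)}) ∧
    ∀ M : Set (H →L[ℂ] H),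
      IsMaxClosedIdealIn
        {T | ∃ K : H →L[ℂ] H, ∃ α β : ℂ,
          IsCompactOperator K ∧ T = K + α • p + β • (1 - p)} M ↔
        (M = {T | ∃ K : H →L[ℂ] H, ∃ α : ℂ, IsCompactOperator K ∧ T = K + α • p} ∨
         M = {T | ∃ K : H →L[ℂ] H, ∃ β : ℂ, IsCompactOperator K ∧ T = K + β • (1 - p)}) :=
  maximal_ideals_of_compacts_plus_two_scalars_general p hsa hidem hrange hker
end
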